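/- Let G be a countable group and H a subgroup of G equipped with a finite symmetric generating set and the associated word length |·| (least m such that h is a product of m generators, |e| = 0). Assume there are a real d > 0 and constants 0 < c₁ ≤ c₂ with c₁ r^d ≤ #{h ∈ H : |h| ≤ r} ≤ c₂ r^d for all r ≥ 1. Let φ : [0,∞) → (0,∞) be increasing and regularly varying at infinity of some positive index, and let μ be a symmetric probability measure on G vanishing off H such that c₃ ≤ μ(h)·φ(1+|h|)·(1+|h|)^d ≤ c₄ for all h ∈ H. Define Φ(t) = t² / ∫₀ᵗ (s/φ(s)) ds for t ≥ 1. Then there exists a constant C such that for all f ∈ ℓ²(G), all R ≥ 1 and all h ∈ H with |h| ≤ R: ∑_{x∈G} |f(xh) − f(x)|² ≤ C Φ(R) E_μ(f,f). -/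

import Mathlib

/-!
Write `D(h) = ∑ₓ (f(xh) - f(x))²` (`shiftEnergy`), so that `E_μ(f,f) = ½ ∑ₕ D(h) μ(h)`
(`sum_shiftEnergy_le`). Up to the usual constants, `√D` is a length function on the group:
`D(h⁻¹) = D(h)` and `D(gh) ≤ (1+t) D(g) + (1+t⁻¹) D(h)` for every `t > 0`.

Fix `|h| ≤ R` and `2ⁿ ≤ R < 2ⁿ⁺¹`. For each dyadic scale `r = 2ʲ`, `j ≤ n`, the element `h` is a
product of `2ⁿ⁺¹⁻ʲ` elements of length at most `r`, so `D(h) ≤ (2ⁿ⁺¹⁻ʲ)² max_{|k| ≤ r} D(k)`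
(`shiftEnergy_prod_le`). Averaging `D(k) ≤ 2 D(kg) + 2 D(g)` over `g` in the ball of radius `r`
(`shiftEnergy_mul_card_le`) and using the volume growth gives
`max_{|k| ≤ r} D(k) ≤ C r⁻ᵈ ∑_{|k| ≤ 2r} D(k)`. Multiply by `4ʲ/φ(2ʲ)` and sum over `j ≤ n`. On the
right, after exchanging the sums, `D(k)` appears with the weight
`∑_{j : |k| ≤ 2ʲ⁺¹} 2⁻ʲᵈ/φ(2ʲ)`, which is a geometric series and, by the doubling property of `φ`
(`exists_doubling`, the only use of regular variation), is at most
`C / ((1+|k|)ᵈ φ(1+|k|)) ≤ C' μ(k)` (`weight_le`). Hence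
`D(h) ∑_{j ≤ n} 4ʲ/φ(2ʲ) ≤ C R² E_μ(f,f)`, and the sum on the left dominates `∫₀ᴿ s/φ(s) ds` up to a
constant because `φ` is monotone (`integral_le_sum`).
-/


open scoped BigOperators Classical

noncomputable section

/-- A symmetric probability measure on a discrete group `G`. -/
def IsSymmProb {G : Type*} [Group G] (μ : G → ℝ) : Prop :=
  (∀ g, 0 ≤ μ g) ∧ Summable μ ∧ (∑' g, μ g) = 1 ∧ (∀ g, μ g⁻¹ = μ g)

/-- Convolution powers of `μ` : `convPow μ 0 = δ_e`, `convPow μ (n+1) = (convPow μ n) * μ`. -/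
def convPow {G : Type*} [Group G] (μ : G → ℝ) : ℕ → G → ℝ
  | 0 => fun x => if x = 1 then 1 else 0
  | n + 1 => fun x => ∑' y, convPow μ n y * μ (y⁻¹ * x)

/-- The Dirichlet form of `μ`. -/
def dirichletForm {G : Type*} [Group G] (μ : G → ℝ) (f : G → ℝ) : ℝ :=
  (1 / 2) * ∑' q : G × G, (f (q.1 * q.2) - f q.1) ^ 2 * μ q.2

/-- The spectral profile `Λ_{2,G,μ}`. -/
def spectralProfile {G : Type*} [Group G] (μ : G → ℝ) (v : ℝ) : ℝ :=
  sInf { r : ℝ | ∃ f : G → ℝ, 1 ≤ (Function.support f).ncard ∧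
    ((Function.support f).ncard : ℝ) ≤ v ∧
    r = dirichletForm μ f / ∑' x, (f x) ^ 2 }

/-- Word length with respect to a set `S` of generators. -/
def wordLength {G : Type*} [Group G] (S : Set G) (g : G) : ℕ :=
  sInf { n : ℕ | ∃ l : List G, l.length = n ∧ (∀ x ∈ l, x ∈ S) ∧ l.prod = g }

/-- `F` is regularly varying at infinity of index `γ`. -/
def RegVaryAt (F : ℝ → ℝ) (γ : ℝ) : Prop :=
  ∀ l : ℝ, 0 < l →
    Filter.Tendsto (fun t => F (l * t) / F t) Filter.atTop (nhds (l ^ γ))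

/-- `G` is finitely generated of polynomial volume growth. -/
def HasPolyGrowth (G : Type*) [Group G] : Prop :=
  ∃ (S : Finset G) (D c C : ℝ), (∀ s ∈ S, s⁻¹ ∈ S) ∧
    Subgroup.closure (S : Set G) = ⊤ ∧ 0 < c ∧ c ≤ C ∧
    ∀ r : ℝ, 1 ≤ r →
      c * r ^ D ≤ (({g : G | (wordLength (S : Set G) g : ℝ) ≤ r}).ncard : ℝ) ∧
      (({g : G | (wordLength (S : Set G) g : ℝ) ≤ r}).ncard : ℝ) ≤ C * r ^ D

/-- A norm on the group `G`. -/
def IsGroupNorm {G : Type*} [Group G] (N : G → ℝ) : Prop :=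
  (∀ g, 0 ≤ N g) ∧ N 1 = 0 ∧ (∀ g, N g⁻¹ = N g) ∧ ∀ g h, N (g * h) ≤ N g + N h

/-- A quasi-norm on the group `G`, with quasi-triangle constant `A`. -/
def IsQuasiNorm {G : Type*} [Group G] (N : G → ℝ) (A : ℝ) : Prop :=
  1 ≤ A ∧ (∀ g, 0 ≤ N g) ∧ N 1 = 0 ∧ (∀ g, N g⁻¹ = N g) ∧
    ∀ g h, N (g * h) ≤ A * (N g + N h)

/-- `f ⪯ g` in a neighborhood of infinity. -/
def Preceq (f g : ℝ → ℝ) : Prop :=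
  ∃ c₁ c₂ M : ℝ, 0 < c₁ ∧ 0 < c₂ ∧ ∀ x, M ≤ x → f x ≤ c₁ * g (c₂ * x)

/-- `Φ(t) = t²/∫₀ᵗ 2s/φ(s) ds` for `t ≥ 1`, extended linearly on `[0,1]` with `Φ(0)=0`. -/
def PhiOf (φ : ℝ → ℝ) (t : ℝ) : ℝ :=
  if 1 ≤ t then t ^ 2 / (intervalIntegral (fun s => 2 * s / φ s) 0 t MeasureTheory.volume)
  else t * (1 / (intervalIntegral (fun s => 2 * s / φ s) 0 1 MeasureTheory.volume))

/-- Generalized right-continuous inverse `F⁻¹(v) = inf {t ≥ 1 : F(t) ≥ v}`. -/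
def Finv (F : ℝ → ℝ) (v : ℝ) : ℝ := sInf { t : ℝ | 1 ≤ t ∧ v ≤ F t }

/-- The set of products of exactly `Q` elements of `U`. -/
def prodSet {G : Type*} [Group G] (Q : ℕ) (U : Set G) : Set G :=
  { g | ∃ l : List G, l.length = Q ∧ (∀ x ∈ l, x ∈ U) ∧ l.prod = g }

/-! ### The energy of a right translation -/

/-- `D(h) = ∑ₓ (f(xh) - f(x))²`, the squared `ℓ²` distance between `f` and its right translate
by `h`. It is only used for square summable `f`, where the series converges. -/
def shiftEnergy {G : Type*} [Group G] (f : G → ℝ) (h : G) : ℝ :=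
  ∑' x, (f (x * h) - f x) ^ 2

section Energy

variable {G : Type*} [Group G] {f : G → ℝ}

lemma summable_shift_sq (hf : Summable (fun x => (f x) ^ 2)) (h : G) :
    Summable (fun x => (f (x * h)) ^ 2) :=
  ((Equiv.mulRight h).summable_iff (f := fun x => (f x) ^ 2)).mpr hf

lemma summable_shift_sub_sq (hf : Summable (fun x => (f x) ^ 2)) (h : G) :
    Summable (fun x => (f (x * h) - f x) ^ 2) := by
  refine Summable.of_nonneg_of_le (fun x => sq_nonneg _) (fun x => ?_)
    (((summable_shift_sq hf h).mul_left 2).add (hf.mul_left 2))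
  nlinarith [sq_nonneg (f (x * h) + f x)]

lemma shiftEnergy_nonneg (f : G → ℝ) (h : G) : 0 ≤ shiftEnergy f h :=
  tsum_nonneg fun _ => sq_nonneg _

lemma shiftEnergy_le (hf : Summable (fun x => (f x) ^ 2)) (h : G) :
    shiftEnergy f h ≤ 4 * ∑' x, (f x) ^ 2 := by
  have h1 : ∑' x, (f (x * h)) ^ 2 = ∑' x, (f x) ^ 2 :=
    (Equiv.mulRight h).tsum_eq (fun x => (f x) ^ 2)
  have h2 : shiftEnergy f h ≤ ∑' x, (2 * (f (x * h)) ^ 2 + 2 * (f x) ^ 2) := by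
    refine Summable.tsum_le_tsum (fun x => ?_) (summable_shift_sub_sq hf h)
      (((summable_shift_sq hf h).mul_left 2).add (hf.mul_left 2))
    nlinarith [sq_nonneg (f (x * h) + f x)]
  rw [Summable.tsum_add ((summable_shift_sq hf h).mul_left 2) (hf.mul_left 2),
    tsum_mul_left, tsum_mul_left, h1] at h2
  linarith

lemma shiftEnergy_inv (f : G → ℝ) (h : G) : shiftEnergy f h⁻¹ = shiftEnergy f h := by
  unfold shiftEnergy
  rw [← (Equiv.mulRight h).tsum_eq (fun x => (f (x * h⁻¹) - f x) ^ 2)]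
  refine tsum_congr fun x => ?_
  simp only [Equiv.coe_mulRight, mul_inv_cancel_right]
  ring

/-- The triangle inequality for `√D`, in the squared form coming from
`(a + b)² ≤ (1 + t) a² + (1 + t⁻¹) b²`. -/
lemma shiftEnergy_mul_le (hf : Summable (fun x => (f x) ^ 2)) (g h : G) {t : ℝ} (ht : 0 < t) :
    shiftEnergy f (g * h) ≤ (1 + t) * shiftEnergy f g + (1 + t⁻¹) * shiftEnergy f h := by
  have e1 : Summable (fun x => (f (x * g * h) - f (x * g)) ^ 2) :=
    ((Equiv.mulRight g).summable_iff (f := fun x => (f (x * h) - f x) ^ 2)).mpr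
      (summable_shift_sub_sq hf h)
  have e2 : ∑' x, (f (x * g * h) - f (x * g)) ^ 2 = shiftEnergy f h :=
    (Equiv.mulRight g).tsum_eq (fun x => (f (x * h) - f x) ^ 2)
  have e3 : shiftEnergy f (g * h) ≤
      ∑' x, ((1 + t) * (f (x * g) - f x) ^ 2 + (1 + t⁻¹) * (f (x * g * h) - f (x * g)) ^ 2) := by
    refine Summable.tsum_le_tsum (fun x => ?_) (summable_shift_sub_sq hf _)
      (((summable_shift_sub_sq hf g).mul_left _).add (e1.mul_left _))
    rw [← mul_assoc]
    generalize f (x * g * h) = a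
    generalize f (x * g) = b
    generalize f x = c
    have : (1 + t) * (b - c) ^ 2 + (1 + t⁻¹) * (a - b) ^ 2 - (a - c) ^ 2
        = t⁻¹ * (t * (b - c) - (a - b)) ^ 2 := by
      field_simp
      ring
    have h0 : 0 ≤ t⁻¹ * (t * (b - c) - (a - b)) ^ 2 := by positivity
    linarith
  rw [Summable.tsum_add ((summable_shift_sub_sq hf g).mul_left _) (e1.mul_left _),
    tsum_mul_left, tsum_mul_left, e2] at e3
  exact e3

/-- The Dirichlet form is `½ ∑ₕ D(h) μ(h)`; finite partial sums therefore stay below `2 E_μ`. -/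
lemma sum_shiftEnergy_le (hf : Summable (fun x => (f x) ^ 2)) {μ : G → ℝ} (hμ : IsSymmProb μ)
    (F : Finset G) : ∑ k ∈ F, shiftEnergy f k * μ k ≤ 2 * dirichletForm μ f := by
  obtain ⟨hμ0, hμs, -, -⟩ := hμ
  have hD : Summable (fun k => shiftEnergy f k * μ k) :=
    Summable.of_nonneg_of_le (fun k => mul_nonneg (shiftEnergy_nonneg f k) (hμ0 k))
      (fun k => mul_le_mul_of_nonneg_right (shiftEnergy_le hf k) (hμ0 k)) (hμs.mul_left _)
  have hrow : ∀ k, Summable (fun x => (f (x * k) - f x) ^ 2 * μ k) := fun k =>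
    (summable_shift_sub_sq hf k).mul_right _
  have hP : Summable (fun q : G × G => (f (q.2 * q.1) - f q.2) ^ 2 * μ q.1) := by
    rw [summable_prod_of_nonneg (fun q => mul_nonneg (sq_nonneg _) (hμ0 _))]
    refine ⟨hrow, ?_⟩
    simp only [tsum_mul_right]
    exact hD
  have h1 : ∑' q : G × G, (f (q.1 * q.2) - f q.1) ^ 2 * μ q.2 =
      ∑' k, shiftEnergy f k * μ k := by
    rw [← (Equiv.prodComm G G).tsum_eq]
    simp only [Equiv.prodComm_apply, Prod.fst_swap, Prod.snd_swap]
    rw [hP.tsum_prod' hrow]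
    simp only [tsum_mul_right, shiftEnergy]
  have h2 : dirichletForm μ f = 1 / 2 * ∑' k, shiftEnergy f k * μ k := by
    rw [← h1]; rfl
  rw [h2]
  have := hD.sum_le_tsum F (fun k _ => mul_nonneg (shiftEnergy_nonneg f k) (hμ0 k))
  linarith

/-- Averaging over a finite set `B`: if `h B` and `B` are contained in `B'`, then
`|B| D(h) ≤ 4 ∑_{B'} D`. -/
lemma shiftEnergy_mul_card_le (hf : Summable (fun x => (f x) ^ 2)) (h : G) (B B' : Finset G)
    (hB : B ⊆ B') (hhB : ∀ g ∈ B, h * g ∈ B') :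
    shiftEnergy f h * B.card ≤ 4 * ∑ k ∈ B', shiftEnergy f k := by
  have h1 : ∀ g ∈ B, shiftEnergy f h ≤ 2 * shiftEnergy f (h * g) + 2 * shiftEnergy f g := by
    intro g _
    have := shiftEnergy_mul_le hf (h * g) g⁻¹ one_pos
    rw [mul_inv_cancel_right, shiftEnergy_inv] at this
    norm_num at this
    exact this
  have h2 : ∑ g ∈ B, shiftEnergy f h ≤
      ∑ g ∈ B, (2 * shiftEnergy f (h * g) + 2 * shiftEnergy f g) := Finset.sum_le_sum h1
  rw [Finset.sum_const, nsmul_eq_mul, Finset.sum_add_distrib, ← Finset.mul_sum,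
    ← Finset.mul_sum] at h2
  have h3 : ∑ g ∈ B, shiftEnergy f g ≤ ∑ k ∈ B', shiftEnergy f k :=
    Finset.sum_le_sum_of_subset_of_nonneg hB fun k _ _ => shiftEnergy_nonneg f k
  have h4 : ∑ g ∈ B, shiftEnergy f (h * g) ≤ ∑ k ∈ B', shiftEnergy f k := by
    rw [← Finset.sum_image (f := fun k => shiftEnergy f k) (g := fun g => h * g)
      (fun a _ b _ hab => mul_left_cancel hab)]
    refine Finset.sum_le_sum_of_subset_of_nonneg ?_ fun k _ _ => shiftEnergy_nonneg f k
    intro k hk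
    obtain ⟨g, hg, rfl⟩ := Finset.mem_image.mp hk
    exact hhB g hg
  linarith

end Energy

/-! ### Word length -/

section WordLength

variable {G : Type*} [Group G]

lemma wordLength_prod_le {S : Set G} {l : List G} (hl : ∀ x ∈ l, x ∈ S) :
    wordLength S l.prod ≤ l.length :=
  Nat.sInf_le ⟨l, rfl, hl, rfl⟩

lemma exists_list_wordLength {S : Set G} (hS : ∀ s ∈ S, s⁻¹ ∈ S) {g : G}
    (hg : g ∈ Subgroup.closure S) :
    ∃ l : List G, l.length = wordLength S g ∧ (∀ x ∈ l, x ∈ S) ∧ l.prod = g := by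
  rw [← Subgroup.mem_toSubmonoid, Subgroup.closure_toSubmonoid] at hg
  obtain ⟨l, hl, rfl⟩ := Submonoid.exists_list_of_mem_closure hg
  have hne : {n : ℕ | ∃ l' : List G, l'.length = n ∧ (∀ x ∈ l', x ∈ S) ∧
      l'.prod = l.prod}.Nonempty := by
    refine ⟨l.length, l, rfl, fun x hx => ?_, rfl⟩
    rcases hl x hx with h | h
    · exact h
    · simpa using hS _ (Set.mem_inv.mp h)
  exact Nat.sInf_mem hne

lemma wordLength_mul_le {S : Set G} (hS : ∀ s ∈ S, s⁻¹ ∈ S) {g h : G}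
    (hg : g ∈ Subgroup.closure S) (hh : h ∈ Subgroup.closure S) :
    wordLength S (g * h) ≤ wordLength S g + wordLength S h := by
  obtain ⟨l, hl, hlS, rfl⟩ := exists_list_wordLength hS hg
  obtain ⟨m, hm, hmS, rfl⟩ := exists_list_wordLength hS hh
  rw [← hl, ← hm, ← List.prod_append, ← List.length_append]
  refine wordLength_prod_le fun x hx => ?_
  rcases List.mem_append.mp hx with h | h
  · exact hlS x h
  · exact hmS x h

/-- Cutting a word of length at most `(m+1) r` into `m+1` pieces of length at most `r` costs a
factor `(m+1)²` in the energy. -/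
lemma shiftEnergy_prod_le {f : G → ℝ} (hf : Summable (fun x => (f x) ^ 2)) {S : Set G}
    {r : ℕ} {A : ℝ}
    (hA : ∀ l : List G, (∀ x ∈ l, x ∈ S) → l.length ≤ r → shiftEnergy f l.prod ≤ A) (m : ℕ) :
    ∀ l : List G, (∀ x ∈ l, x ∈ S) → l.length ≤ (m + 1) * r →
      shiftEnergy f l.prod ≤ ((m : ℝ) + 1) ^ 2 * A := by
  induction m with
  | zero =>
    intro l hl hlen
    simpa using hA l hl (by simpa using hlen)
  | succ m ih =>
    intro l hl hlen
    have h1 := hA (l.take r) (fun x hx => hl x (List.mem_of_mem_take hx)) (by simp)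
    have h2 := ih (l.drop r) (fun x hx => hl x (List.mem_of_mem_drop hx)) (by
      rw [List.length_drop]
      have : (m + 1 + 1) * r = (m + 1) * r + r := by ring
      omega)
    have hm : (0 : ℝ) < (m : ℝ) + 1 := by positivity
    have h3 := shiftEnergy_mul_le hf (l.take r).prod (l.drop r).prod hm
    rw [List.prod_take_mul_prod_drop] at h3
    refine h3.trans ?_
    calc _ ≤ (1 + ((m : ℝ) + 1)) * A +
          (1 + ((m : ℝ) + 1)⁻¹) * (((m : ℝ) + 1) ^ 2 * A) := by gcongr
      _ = (((m + 1 : ℕ) : ℝ) + 1) ^ 2 * A := by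
        push_cast
        field_simp
        ring

end WordLength

/-! ### The scale function -/

section Scale

variable {φ : ℝ → ℝ}

lemma exists_doubling (hφpos : ∀ t : ℝ, 0 ≤ t → 0 < φ t) (hφmono : MonotoneOn φ (Set.Ici 0))
    {γ : ℝ} (hφreg : RegVaryAt φ γ) :
    ∃ K : ℝ, 0 < K ∧ ∀ t : ℝ, 1 ≤ t → φ (4 * t) ≤ K * φ t := by
  have h1 := (hφreg 4 (by norm_num)).eventually (gt_mem_nhds (lt_add_one ((4 : ℝ) ^ γ)))
  obtain ⟨T, hT⟩ := Filter.eventually_atTop.mp h1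
  have h0 := hφpos 1 zero_le_one
  have h4 : 0 < φ (4 * |T|) := hφpos _ (by positivity)
  have hg : (0 : ℝ) < (4 : ℝ) ^ γ + 1 := by positivity
  refine ⟨(4 : ℝ) ^ γ + 1 + φ (4 * |T|) / φ 1, by positivity, fun t ht => ?_⟩
  have hφt := hφpos t (by linarith)
  rcases le_total T t with h | h
  · have := (div_lt_iff₀ hφt).mp (hT t h)
    have h5 : 0 ≤ φ (4 * |T|) / φ 1 * φ t := by positivity
    nlinarith
  · have a1 : φ (4 * t) ≤ φ (4 * |T|) :=
      hφmono (Set.mem_Ici.mpr (by linarith)) (Set.mem_Ici.mpr (by positivity))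
        (by linarith [le_abs_self T])
    have a2 : φ 1 ≤ φ t :=
      hφmono (Set.mem_Ici.mpr zero_le_one) (Set.mem_Ici.mpr (by linarith)) ht
    have a3 : φ (4 * |T|) ≤ φ (4 * |T|) / φ 1 * φ t := by
      rw [div_mul_eq_mul_div, le_div_iff₀ h0]
      gcongr
    have h5 : 0 ≤ ((4 : ℝ) ^ γ + 1) * φ t := by positivity
    nlinarith

lemma intervalIntegrable_div (hφpos : ∀ t : ℝ, 0 ≤ t → 0 < φ t)
    (hφmono : MonotoneOn φ (Set.Ici 0)) {a b : ℝ} (ha : 0 ≤ a) (hb : 0 ≤ b) :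
    IntervalIntegrable (fun s => s / φ s) MeasureTheory.volume a b := by
  have hsub : Set.uIcc a b ⊆ Set.Ici 0 := fun x hx => le_trans (le_min ha hb) hx.1
  have h1 : AntitoneOn (fun s => (φ s)⁻¹) (Set.uIcc a b) := fun x hx y hy hxy =>
    inv_anti₀ (hφpos x (hsub hx)) (hφmono (hsub hx) (hsub hy) hxy)
  simp only [div_eq_mul_inv]
  exact h1.intervalIntegrable.continuousOn_mul continuousOn_id

lemma integral_piece_le (hφpos : ∀ t : ℝ, 0 ≤ t → 0 < φ t)
    (hφmono : MonotoneOn φ (Set.Ici 0)) {a b : ℝ} (ha : 0 ≤ a) (hab : a ≤ b) :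
    intervalIntegral (fun s => s / φ s) a b MeasureTheory.volume ≤ (b - a) * (b / φ a) := by
  have h := intervalIntegral.integral_mono_on (μ := MeasureTheory.volume) hab
    (intervalIntegrable_div hφpos hφmono ha (ha.trans hab))
    (intervalIntegrable_const (c := b / φ a)) (fun x hx => by
      have h1 : φ a ≤ φ x := hφmono ha (ha.trans hx.1) hx.1
      have h2 := hφpos a ha
      exact div_le_div₀ (ha.trans hab) hx.2 h2 h1)
  rwa [intervalIntegral.integral_const, smul_eq_mul] at h

lemma integral_le_sum (hφpos : ∀ t : ℝ, 0 ≤ t → 0 < φ t)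
    (hφmono : MonotoneOn φ (Set.Ici 0)) (n : ℕ) :
    intervalIntegral (fun s => s / φ s) 0 (2 ^ n) MeasureTheory.volume ≤
      1 / φ 0 + 2 * ∑ j ∈ Finset.range n, (4 : ℝ) ^ j / φ (2 ^ j) := by
  induction n with
  | zero => simpa using integral_piece_le hφpos hφmono le_rfl zero_le_one
  | succ n ih =>
    have hn : (0 : ℝ) ≤ 2 ^ n := by positivity
    have hn1 : (0 : ℝ) ≤ 2 ^ (n + 1) := by positivity
    rw [← intervalIntegral.integral_add_adjacent_intervals
      (intervalIntegrable_div hφpos hφmono le_rfl hn) (intervalIntegrable_div hφpos hφmono hn hn1),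
      Finset.sum_range_succ]
    have h1 := integral_piece_le hφpos hφmono hn
      (show (2 : ℝ) ^ n ≤ 2 ^ (n + 1) by rw [pow_succ]; linarith)
    have h2 : ((2 : ℝ) ^ (n + 1) - 2 ^ n) * (2 ^ (n + 1) / φ (2 ^ n)) =
        2 * (4 ^ n / φ (2 ^ n)) := by
      rw [show (4 : ℝ) = 2 ^ 2 by norm_num, ← pow_mul]
      ring
    rw [h2] at h1
    linarith

lemma integral_pos (hφpos : ∀ t : ℝ, 0 ≤ t → 0 < φ t)
    (hφmono : MonotoneOn φ (Set.Ici 0)) {R : ℝ} (hR : 0 < R) :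
    0 < intervalIntegral (fun s => s / φ s) 0 R MeasureTheory.volume :=
  intervalIntegral.intervalIntegral_pos_of_pos_on
    (intervalIntegrable_div hφpos hφmono le_rfl hR.le)
    (fun x hx => div_pos hx.1 (hφpos x hx.1.le)) hR

/-- The weight of a group element of length `L` after exchanging the dyadic sum with the sum over
the group. The geometric series starts at the first `j` with `L ≤ 2ʲ⁺¹`, where `1 + L ≤ 4 · 2ʲ`. -/
lemma weight_le (hφpos : ∀ t : ℝ, 0 ≤ t → 0 < φ t) (hφmono : MonotoneOn φ (Set.Ici 0))
    {K : ℝ} (hK : 0 < K) (hdbl : ∀ t : ℝ, 1 ≤ t → φ (4 * t) ≤ K * φ t)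
    {d : ℝ} (hd : 0 < d) (n L : ℕ) :
    ∑ j ∈ Finset.range n, (if L ≤ 2 ^ (j + 1) then 1 / (((2 : ℝ) ^ j) ^ d * φ (2 ^ j)) else 0) ≤
      (K * (4 : ℝ) ^ d / (1 - ((2 : ℝ) ^ d)⁻¹)) / (φ (1 + L) * (1 + (L : ℝ)) ^ d) := by
  have hφL : 0 < φ (1 + L) := hφpos _ (by positivity)
  set q : ℝ := ((2 : ℝ) ^ d)⁻¹ with hq
  have h2d : (1 : ℝ) < (2 : ℝ) ^ d := Real.one_lt_rpow one_lt_two hd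
  have hq0 : 0 < q := by positivity
  have hq1 : q < 1 := inv_lt_one_of_one_lt₀ h2d
  have hqj : ∀ j : ℕ, (((2 : ℝ) ^ j) ^ d)⁻¹ = q ^ j := by
    intro j
    rw [hq, inv_pow, ← Real.rpow_natCast ((2 : ℝ) ^ d), ← Real.rpow_natCast (2 : ℝ),
      ← Real.rpow_mul zero_le_two, ← Real.rpow_mul zero_le_two, mul_comm]
  have hex : ∃ j : ℕ, L ≤ 2 ^ (j + 1) := ⟨L, by
    have := Nat.lt_two_pow_self (n := L + 1); omega⟩
  set j₀ := Nat.find hex with hj₀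
  have hj₀L : L ≤ 2 ^ (j₀ + 1) := Nat.find_spec hex
  have h14 : ∀ j : ℕ, L ≤ 2 ^ (j + 1) → 1 + (L : ℝ) ≤ 4 * 2 ^ j := by
    intro j hj
    have h1 : (L : ℝ) ≤ 2 ^ (j + 1) := by exact_mod_cast hj
    have h2 : (1 : ℝ) ≤ 2 ^ j := one_le_pow₀ one_le_two
    rw [pow_succ] at h1
    linarith
  -- Termwise: doubling replaces `φ (2 ^ j)` by `φ (1 + L)`.
  have hterm : ∀ j ∈ Finset.range n,
      (if L ≤ 2 ^ (j + 1) then 1 / (((2 : ℝ) ^ j) ^ d * φ (2 ^ j)) else 0) ≤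
        K / φ (1 + L) * (if j₀ ≤ j then q ^ j else 0) := by
    intro j _
    by_cases hj : L ≤ 2 ^ (j + 1)
    · have hjj : j₀ ≤ j := Nat.find_min' hex hj
      have h2 : (1 : ℝ) ≤ 2 ^ j := one_le_pow₀ one_le_two
      have hφj : 0 < φ (2 ^ j) := hφpos _ (by positivity)
      have h3 : φ (1 + L) ≤ K * φ (2 ^ j) :=
        (hφmono (Set.mem_Ici.mpr (by positivity)) (Set.mem_Ici.mpr (by positivity))
          (h14 j hj)).trans (hdbl _ h2)
      rw [if_pos hj, if_pos hjj, ← hqj, one_div, mul_inv, mul_comm]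
      refine mul_le_mul_of_nonneg_right ?_ (by positivity)
      rw [le_div_iff₀ hφL, inv_mul_le_iff₀ hφj]
      linarith
    · rw [if_neg hj]
      positivity
  have hgeom : ∑ j ∈ Finset.range n, (if j₀ ≤ j then q ^ j else 0) ≤ q ^ j₀ / (1 - q) := by
    have hs : HasSum (fun i : ℕ => q ^ i * q ^ j₀) ((1 - q)⁻¹ * q ^ j₀) :=
      (hasSum_geometric_of_lt_one hq0.le hq1).mul_right _
    have h1 : ∑ j ∈ Finset.range n, (if j₀ ≤ j then q ^ j else 0) ≤
        ∑ i ∈ Finset.range n, q ^ i * q ^ j₀ := by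
      rw [← Finset.sum_filter]
      have : (Finset.range n).filter (fun j => j₀ ≤ j) ⊆
          (Finset.range n).image (fun i => i + j₀) := by
        intro j hj
        simp only [Finset.mem_filter, Finset.mem_range, Finset.mem_image] at hj ⊢
        exact ⟨j - j₀, by omega, by omega⟩
      refine (Finset.sum_le_sum_of_subset_of_nonneg this fun _ _ _ => by positivity).trans ?_
      rw [Finset.sum_image (by intro a _ b _ h; simpa using h)]
      simp only [pow_add, le_refl]
    refine h1.trans ((sum_le_hasSum _ (fun _ _ => by positivity) hs).trans ?_)
    rw [div_eq_inv_mul]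
  have hpow : q ^ j₀ ≤ (4 : ℝ) ^ d / (1 + (L : ℝ)) ^ d := by
    have hpos : (0 : ℝ) < (1 + (L : ℝ)) ^ d := by positivity
    have hpos2 : (0 : ℝ) < ((2 : ℝ) ^ j₀) ^ d := by positivity
    rw [← hqj, le_div_iff₀ hpos, inv_mul_le_iff₀ hpos2, mul_comm,
      ← Real.mul_rpow (by norm_num) (by positivity)]
    exact Real.rpow_le_rpow (by positivity) (h14 j₀ hj₀L) hd.le
  have hq2 : 0 < 1 - q := by linarith
  calc _ ≤ ∑ j ∈ Finset.range n, K / φ (1 + L) * (if j₀ ≤ j then q ^ j else 0) :=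
        Finset.sum_le_sum hterm
    _ = K / φ (1 + L) * ∑ j ∈ Finset.range n, (if j₀ ≤ j then q ^ j else 0) := by
        rw [Finset.mul_sum]
    _ ≤ K / φ (1 + L) * (((4 : ℝ) ^ d / (1 + (L : ℝ)) ^ d) / (1 - q)) := by
        gcongr
        exact hgeom.trans (by gcongr)
    _ = _ := by
        have hpos : (0 : ℝ) < (1 + (L : ℝ)) ^ d := by positivity
        field_simp

end Scale

/-! ### The pseudo-Poincaré inequality -/

/-- pseudo-Poincaré inequality with rate `Φ(R) = R²/∫₀ᴿ s/φ(s) ds`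
for a measure supported on a finitely generated subgroup with its word length. -/
theorem stmt4 {G : Type*} [Group G] [Countable G]
    (H : Subgroup G) (S : Finset G)
    (hSsymm : ∀ s ∈ S, s⁻¹ ∈ S) (hSgen : Subgroup.closure (S : Set G) = H)
    (d : ℝ) (hd : 0 < d) (c₁ c₂ : ℝ) (hc₁ : 0 < c₁) (hc₁₂ : c₁ ≤ c₂)
    (hcount : ∀ r : ℝ, 1 ≤ r →
      c₁ * r ^ d ≤
        (({h : G | h ∈ H ∧ (wordLength (S : Set G) h : ℝ) ≤ r}).ncard : ℝ) ∧
      (({h : G | h ∈ H ∧ (wordLength (S : Set G) h : ℝ) ≤ r}).ncard : ℝ) ≤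
        c₂ * r ^ d)
    (φ : ℝ → ℝ) (hφpos : ∀ t : ℝ, 0 ≤ t → 0 < φ t)
    (hφmono : MonotoneOn φ (Set.Ici 0))
    (γ : ℝ) (hγ : 0 < γ) (hφreg : RegVaryAt φ γ)
    (μ : G → ℝ) (hμ : IsSymmProb μ) (hμsupp : ∀ g, g ∉ H → μ g = 0)
    (c₃ c₄ : ℝ) (hc₃ : 0 < c₃) (hc₃₄ : c₃ ≤ c₄)
    (hμcomp : ∀ h ∈ H,
      c₃ ≤ μ h * φ (1 + (wordLength (S : Set G) h : ℝ)) *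
        (1 + (wordLength (S : Set G) h : ℝ)) ^ d ∧
      μ h * φ (1 + (wordLength (S : Set G) h : ℝ)) *
        (1 + (wordLength (S : Set G) h : ℝ)) ^ d ≤ c₄) :
    ∃ C : ℝ, ∀ f : G → ℝ, Summable (fun x => (f x) ^ 2) →
      ∀ R : ℝ, 1 ≤ R → ∀ h ∈ H, (wordLength (S : Set G) h : ℝ) ≤ R →
        ∑' x, (f (x * h) - f x) ^ 2 ≤
          C * (R ^ 2 / intervalIntegral (fun s => s / φ s) 0 R MeasureTheory.volume) *
            dirichletForm μ f := by
  classical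
  have hS : ∀ s ∈ (S : Set G), s⁻¹ ∈ (S : Set G) := fun s hs => hSsymm s hs
  subst hSgen
  set wl : G → ℕ := wordLength (S : Set G) with hwl
  obtain ⟨K, hK, hdbl⟩ := exists_doubling hφpos hφmono hφreg
  set Q : ℝ := K * (4 : ℝ) ^ d / (1 - ((2 : ℝ) ^ d)⁻¹) with hQ
  have h2d : ((2 : ℝ) ^ d)⁻¹ < 1 := inv_lt_one_of_one_lt₀ (Real.one_lt_rpow one_lt_two hd)
  have hQ0 : 0 < Q := by
    have : 0 < 1 - ((2 : ℝ) ^ d)⁻¹ := by linarith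
    positivity
  have hφ0 := hφpos 0 le_rfl
  have hφ1 := hφpos 1 zero_le_one
  -- The ball of radius `r ≥ 1` is finite because its `ncard` is positive.
  have hfin : ∀ r : ℕ, 1 ≤ r →
      {h : G | h ∈ Subgroup.closure (S : Set G) ∧ ((wl h : ℕ) : ℝ) ≤ (r : ℝ)}.Finite := by
    intro r hr
    have hr1 : (1 : ℝ) ≤ r := by exact_mod_cast hr
    have h1 := (hcount r hr1).1
    have h2 : 0 < c₁ * (r : ℝ) ^ d := by positivity
    refine Set.finite_of_ncard_pos ?_
    exact_mod_cast h2.trans_le h1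
  have hball : ∀ r : ℕ, ∃ B : Finset G, 1 ≤ r →
      (∀ k, k ∈ B ↔ k ∈ Subgroup.closure (S : Set G) ∧ wl k ≤ r) ∧
        c₁ * (r : ℝ) ^ d ≤ B.card := by
    intro r
    by_cases hr : 1 ≤ r
    · refine ⟨(hfin r hr).toFinset, fun _ => ⟨fun k => by simp, ?_⟩⟩
      rw [← Set.ncard_eq_toFinset_card _ (hfin r hr)]
      exact (hcount r (by exact_mod_cast hr)).1
    · exact ⟨∅, fun h => absurd h hr⟩
  choose B hB using hball
  refine ⟨(φ 1 / φ 0 + 2) * (4 * (4 * c₁⁻¹ * (Q * c₃⁻¹ * 2))), fun f hf R hR h hh hhR => ?_⟩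
  change shiftEnergy f h ≤ _
  have hD0 := shiftEnergy_nonneg f
  have hE0 : 0 ≤ dirichletForm μ f := by
    have := sum_shiftEnergy_le hf hμ ∅
    simp only [Finset.sum_empty] at this
    linarith
  obtain ⟨n, hn, hn'⟩ := exists_nat_pow_near hR one_lt_two
  have hhn : wl h ≤ 2 ^ (n + 1) := by
    have : ((wl h : ℕ) : ℝ) ≤ ((2 ^ (n + 1) : ℕ) : ℝ) := by
      push_cast
      exact hhR.trans hn'.le
    exact_mod_cast this
  have hpow1 : ∀ j : ℕ, 1 ≤ 2 ^ j := fun j => Nat.one_le_two_pow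
  -- Averaging at scale `2 ^ j`.
  have havg : ∀ j : ℕ, ∀ k ∈ Subgroup.closure (S : Set G), wl k ≤ 2 ^ j →
      shiftEnergy f k ≤
        4 * c₁⁻¹ * ((∑ y ∈ B (2 ^ (j + 1)), shiftEnergy f y) / ((2 : ℝ) ^ j) ^ d) := by
    intro j k hk hkj
    obtain ⟨hm, hc⟩ := hB (2 ^ j) (hpow1 j)
    obtain ⟨hm', -⟩ := hB (2 ^ (j + 1)) (hpow1 (j + 1))
    have h2j : 2 ^ (j + 1) = 2 ^ j + 2 ^ j := by ring
    have h1 := shiftEnergy_mul_card_le hf k (B (2 ^ j)) (B (2 ^ (j + 1)))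
      (fun y hy => by
        rw [hm] at hy
        rw [hm']
        exact ⟨hy.1, by omega⟩)
      (fun y hy => by
        rw [hm] at hy
        rw [hm']
        refine ⟨mul_mem hk hy.1, ?_⟩
        have : wl (k * y) ≤ wl k + wl y := wordLength_mul_le hS hk hy.1
        omega)
    push_cast at hc
    have h2 := (mul_le_mul_of_nonneg_left hc (hD0 k)).trans h1
    have hpos : (0 : ℝ) < ((2 : ℝ) ^ j) ^ d := by positivity
    have h3 : 4 * c₁⁻¹ * ((∑ y ∈ B (2 ^ (j + 1)), shiftEnergy f y) / ((2 : ℝ) ^ j) ^ d) =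
        (4 * ∑ y ∈ B (2 ^ (j + 1)), shiftEnergy f y) / (c₁ * ((2 : ℝ) ^ j) ^ d) := by
      field_simp
    rw [h3, le_div_iff₀ (by positivity)]
    exact h2
  -- Chaining from scale `2 ^ j` up to scale `2 ^ (n + 1)`.
  have hchain : ∀ j ∈ Finset.range (n + 1),
      (4 : ℝ) ^ j / φ (2 ^ j) * shiftEnergy f h ≤ 4 * R ^ 2 * (4 * c₁⁻¹ *
        ∑ y ∈ B (2 ^ (n + 1)), shiftEnergy f y *
          (if wl y ≤ 2 ^ (j + 1) then 1 / (((2 : ℝ) ^ j) ^ d * φ (2 ^ j)) else 0)) := by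
    intro j hj
    have hjn : j ≤ n := by
      have := Finset.mem_range.mp hj
      omega
    set T : ℝ := ∑ y ∈ B (2 ^ (j + 1)), shiftEnergy f y with hT
    have hT0 : 0 ≤ T := Finset.sum_nonneg fun y _ => hD0 y
    have hφj : 0 < φ (2 ^ j) := hφpos _ (by positivity)
    have hpos : (0 : ℝ) < ((2 : ℝ) ^ j) ^ d := by positivity
    obtain ⟨l, hl, hlS, hlh⟩ := exists_list_wordLength hS hh
    obtain ⟨m, hm⟩ : ∃ m : ℕ, m + 1 = 2 ^ (n + 1 - j) :=
      ⟨2 ^ (n + 1 - j) - 1, Nat.sub_add_cancel (hpow1 _)⟩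
    have hmm : (m + 1) * 2 ^ j = 2 ^ (n + 1) := by
      rw [hm, ← pow_add]
      congr 1
      omega
    have h1 := shiftEnergy_prod_le hf (S := (S : Set G)) (r := 2 ^ j)
      (fun l' hl' hlen => havg j l'.prod
        (list_prod_mem fun x hx => Subgroup.subset_closure (hl' x hx))
        ((wordLength_prod_le hl').trans hlen)) m l hlS (by rw [hl, hmm]; exact hhn)
    rw [hlh] at h1
    have hsum : ∑ y ∈ B (2 ^ (n + 1)), shiftEnergy f y *
          (if wl y ≤ 2 ^ (j + 1) then 1 / (((2 : ℝ) ^ j) ^ d * φ (2 ^ j)) else 0) =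
        T * (1 / (((2 : ℝ) ^ j) ^ d * φ (2 ^ j))) := by
      simp only [mul_ite, mul_zero]
      rw [← Finset.sum_filter, hT, Finset.sum_mul]
      refine Finset.sum_congr ?_ fun _ _ => rfl
      ext y
      have hle : 2 ^ (j + 1) ≤ 2 ^ (n + 1) := Nat.pow_le_pow_right two_pos (by omega)
      rw [Finset.mem_filter, (hB _ (hpow1 (n + 1))).1, (hB _ (hpow1 (j + 1))).1]
      constructor
      · rintro ⟨⟨a, -⟩, b⟩
        exact ⟨a, b⟩
      · rintro ⟨a, b⟩
        exact ⟨⟨a, b.trans hle⟩, b⟩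
    have hmR : ((m : ℝ) + 1) * 2 ^ j ≤ 2 * R := by
      have : ((m : ℝ) + 1) * 2 ^ j = 2 ^ (n + 1) := by exact_mod_cast hmm
      rw [this, pow_succ]
      linarith
    have hmR2 : (4 : ℝ) ^ j * ((m : ℝ) + 1) ^ 2 ≤ 4 * R ^ 2 := by
      have h4 : (4 : ℝ) ^ j = (2 ^ j) ^ 2 := by
        rw [← pow_mul, mul_comm, pow_mul]
        norm_num
      have := pow_le_pow_left₀ (by positivity) hmR 2
      rw [h4]
      nlinarith
    rw [hsum]
    calc (4 : ℝ) ^ j / φ (2 ^ j) * shiftEnergy f h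
        ≤ (4 : ℝ) ^ j / φ (2 ^ j) *
            (((m : ℝ) + 1) ^ 2 * (4 * c₁⁻¹ * (T / ((2 : ℝ) ^ j) ^ d))) := by gcongr
      _ = ((4 : ℝ) ^ j * ((m : ℝ) + 1) ^ 2) *
            (4 * c₁⁻¹ * (T * (1 / (((2 : ℝ) ^ j) ^ d * φ (2 ^ j))))) := by
          field_simp
      _ ≤ _ := by gcongr
  set W : ℝ := ∑ j ∈ Finset.range (n + 1), (4 : ℝ) ^ j / φ (2 ^ j) with hW
  have hmain : W * shiftEnergy f h ≤
      4 * R ^ 2 * (4 * c₁⁻¹ * (Q * c₃⁻¹ * 2 * dirichletForm μ f)) := by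
    rw [hW, Finset.sum_mul]
    refine (Finset.sum_le_sum hchain).trans ?_
    rw [← Finset.mul_sum, ← Finset.mul_sum, Finset.sum_comm]
    gcongr
    calc _ ≤ ∑ y ∈ B (2 ^ (n + 1)), Q * c₃⁻¹ * (shiftEnergy f y * μ y) := by
          refine Finset.sum_le_sum fun y hy => ?_
          rw [← Finset.mul_sum]
          have hyH := ((hB _ (hpow1 (n + 1))).1 y |>.mp hy).1
          have h1 := weight_le hφpos hφmono hK hdbl hd (n + 1) (wl y)
          have hφy : 0 < φ (1 + (wl y : ℝ)) := hφpos _ (by positivity)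
          have hy0 : (0 : ℝ) < (1 + (wl y : ℝ)) ^ d := by positivity
          have h2 : Q / (φ (1 + (wl y : ℝ)) * (1 + (wl y : ℝ)) ^ d) ≤ Q * c₃⁻¹ * μ y := by
            have h3 := (hμcomp y hyH).1
            rw [div_le_iff₀ (by positivity)]
            calc Q = Q * c₃⁻¹ * c₃ := by field_simp
              _ ≤ Q * c₃⁻¹ * (μ y * φ (1 + (wl y : ℝ)) * (1 + (wl y : ℝ)) ^ d) := by gcongr
              _ = _ := by ring
          calc _ ≤ shiftEnergy f y * (Q * c₃⁻¹ * μ y) :=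
                mul_le_mul_of_nonneg_left (h1.trans h2) (hD0 y)
            _ = _ := by ring
      _ ≤ Q * c₃⁻¹ * (2 * dirichletForm μ f) := by
          rw [← Finset.mul_sum]
          gcongr
          exact sum_shiftEnergy_le hf hμ _
      _ = _ := by ring
  have hI0 := integral_pos hφpos hφmono (show 0 < R by linarith)
  set I : ℝ := intervalIntegral (fun s => s / φ s) 0 R MeasureTheory.volume with hI
  have hIW : I ≤ (φ 1 / φ 0 + 2) * W := by
    have h1 : I ≤ intervalIntegral (fun s => s / φ s) 0 (2 ^ (n + 1)) MeasureTheory.volume := by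
      rw [← intervalIntegral.integral_add_adjacent_intervals
        (intervalIntegrable_div hφpos hφmono le_rfl (show 0 ≤ R by linarith))
        (intervalIntegrable_div hφpos hφmono (show 0 ≤ R by linarith)
          (show (0 : ℝ) ≤ 2 ^ (n + 1) by positivity))]
      have : 0 ≤ intervalIntegral (fun s => s / φ s) R (2 ^ (n + 1)) MeasureTheory.volume :=
        intervalIntegral.integral_nonneg hn'.le fun x hx => by
          have hx0 : 0 ≤ x := by linarith [hx.1]
          exact div_nonneg hx0 (hφpos x hx0).le
      linarith
    have h2 := integral_le_sum hφpos hφmono (n + 1)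
    -- The `j = 0` term of `W` absorbs the contribution of `[0, 1]`.
    have h3 : 1 / φ 1 ≤ W := by
      have := Finset.single_le_sum (f := fun j : ℕ => (4 : ℝ) ^ j / φ (2 ^ j))
        (fun j _ => div_nonneg (by positivity) (hφpos _ (by positivity)).le)
        (Finset.mem_range.mpr (Nat.succ_pos n))
      simpa using this
    have h4 : 1 / φ 0 ≤ φ 1 / φ 0 * W := by
      calc 1 / φ 0 = φ 1 / φ 0 * (1 / φ 1) := by field_simp
        _ ≤ _ := by gcongr
    linarith
  have hfinal : shiftEnergy f h * I ≤ (φ 1 / φ 0 + 2) *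
      (4 * R ^ 2 * (4 * c₁⁻¹ * (Q * c₃⁻¹ * 2 * dirichletForm μ f))) := by
    calc shiftEnergy f h * I ≤ shiftEnergy f h * ((φ 1 / φ 0 + 2) * W) :=
          mul_le_mul_of_nonneg_left hIW (hD0 h)
      _ = (φ 1 / φ 0 + 2) * (W * shiftEnergy f h) := by ring
      _ ≤ _ := by gcongr
  rw [← le_div_iff₀ hI0] at hfinal
  refine hfinal.trans (le_of_eq ?_)
  ring
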